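/- Fix an integer m and let 𝒩 be the number of pairs (x,y) ∈ ℤ² with gcd(x,y) = 1 and xy(x+y) ≠ 0 such that F_m(x,y) is positive and divides m²+3m+9. Then the number of integers n with n ≥ −1, n ≠ m, n ≠ −m−3 and L_n = L_m equals 𝒩/3; equivalently, 𝒩 = 3 · #{n ∈ ℤ : n ≥ −1, n ∉ {m, −m−3}, L_n = L_m}. -/

import Mathlib

open Polynomial

/-- The cubic form `F_m(X,Y) = X³ − mX²Y − (m+3)XY² − Y³`. -/
def F (m x y : ℤ) : ℤ := x ^ 3 - m * x ^ 2 * y - (m + 3) * x * y ^ 2 - y ^ 3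

/-- The simplest cubic polynomial `f_m(X) = X³ − mX² − (m+3)X − 1` over `ℚ`. -/
noncomputable def f (m : ℤ) : ℚ[X] :=
  X ^ 3 - C (m : ℚ) * X ^ 2 - C ((m : ℚ) + 3) * X - 1

/-- The simplest cubic field `L_m`. -/
noncomputable def L (m : ℤ) : IntermediateField ℚ (AlgebraicClosure ℚ) :=
  IntermediateField.adjoin ℚ ((f m).rootSet (AlgebraicClosure ℚ))

abbrev KK := AlgebraicClosure ℚ

instance instAlgKK : Algebra.IsAlgebraic ℚ KK := by
  have h : @Algebra.IsAlgebraic ℚ KK _ _ (AlgebraicClosure.instAlgebra (R := ℚ) ℚ) :=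
    AlgebraicClosure.isAlgebraic ℚ
  convert h using 1
  exact Subsingleton.elim _ _

instance instNormKK : Normal ℚ KK := by
  have h : @Normal ℚ KK _ _ (AlgebraicClosure.instAlgebra (R := ℚ) ℚ) := IsAlgClosure.normal ℚ _
  convert h
  exact Subsingleton.elim _ _

/-- `θ` is a root of `f_m`. -/
def IsR (m : ℤ) (θ : KK) : Prop := θ ^ 3 - (m : KK) * θ ^ 2 - ((m : KK) + 3) * θ - 1 = 0

lemma F_odd (m x y : ℤ) (h : Int.gcd x y = 1) : F m x y % 2 = 1 := by
  have key : ¬ (x % 2 = 0 ∧ y % 2 = 0) := by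
    rintro ⟨hx, hy⟩
    have := Int.dvd_coe_gcd (Int.dvd_of_emod_eq_zero hx) (Int.dvd_of_emod_eq_zero hy)
    rw [h] at this
    omega
  unfold F
  rcases Int.emod_two_eq_zero_or_one x with hx | hx <;>
  rcases Int.emod_two_eq_zero_or_one y with hy | hy <;>
  rcases Int.emod_two_eq_zero_or_one m with hm | hm <;>
  first
  | (exfalso; exact key ⟨hx, hy⟩)
  | (simp [Int.sub_emod, Int.add_emod, Int.mul_emod, pow_succ, hx, hy, hm])

lemma no_rat_root (m : ℤ) (t : ℚ) : t ^ 3 - (m : ℚ) * t ^ 2 - ((m : ℚ) + 3) * t - 1 ≠ 0 := by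
  intro h
  have hd : (t.den : ℚ) ≠ 0 := by exact_mod_cast t.den_ne_zero
  have ht : t * t.den = t.num := Rat.mul_den_eq_num t
  have h0 : F m t.num t.den = 0 := by
    have : (F m t.num t.den : ℚ) = 0 := by
      unfold F
      push_cast
      rw [← ht]
      linear_combination (t.den : ℚ) ^ 3 * h
    exact_mod_cast this
  have := F_odd m t.num t.den (by simpa [Int.gcd] using t.reduced)
  omega

lemma f_monic (m : ℤ) : (f m).Monic := by
  unfold f; monicity!

lemma f_deg (m : ℤ) : (f m).natDegree = 3 := by
  unfold f; compute_degree!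

lemma f_irr (m : ℤ) : Irreducible (f m) := by
  rw [(f_monic m).irreducible_iff_roots_eq_zero_of_degree_le_three (by rw [f_deg]; norm_num)
    (by rw [f_deg])]
  rw [Multiset.eq_zero_iff_forall_notMem]
  intro t ht
  have := (Polynomial.mem_roots'.1 ht).2
  apply no_rat_root m t
  simpa [f, Polynomial.IsRoot] using this

lemma mem_rootSet_f (m : ℤ) (θ : KK) : θ ∈ (f m).rootSet KK ↔ IsR m θ := by
  rw [Polynomial.mem_rootSet_of_ne (f_monic m).ne_zero]
  simp [f, IsR]

lemma IsR.aeval {m : ℤ} {θ : KK} (h : IsR m θ) : Polynomial.aeval θ (f m) = 0 := by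
  simpa [f, IsR] using h

lemma IsR.minpoly {m : ℤ} {θ : KK} (h : IsR m θ) : minpoly ℚ θ = f m :=
  (minpoly.eq_of_irreducible_of_monic (f_irr m) h.aeval (f_monic m)).symm

lemma exists_root (m : ℤ) : ∃ θ : KK, IsR m θ := by
  obtain ⟨θ, h⟩ := IsAlgClosed.exists_aeval_eq_zero KK (f m) (by
    rw [(Polynomial.degree_eq_iff_natDegree_eq (f_monic m).ne_zero).2 (f_deg m)]; norm_num)
  exact ⟨θ, by simpa [f, IsR] using h⟩

lemma IsR.ne_rat {m : ℤ} {θ : KK} (h : IsR m θ) (t : ℚ) : θ ≠ (t : KK) := by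
  rintro rfl
  apply no_rat_root m t
  unfold IsR at h
  exact_mod_cast h

lemma IsR.ne_zero {m : ℤ} {θ : KK} (h : IsR m θ) : θ ≠ 0 := by
  simpa using h.ne_rat 0

lemma IsR.add_ne {m : ℤ} {θ : KK} (h : IsR m θ) (t : ℚ) : (t : KK) - θ ≠ 0 := by
  rw [sub_ne_zero]; exact (h.ne_rat t).symm

lemma IsR.one_add_ne {m : ℤ} {θ : KK} (h : IsR m θ) : 1 + θ ≠ 0 := by
  have := h.add_ne (-1)
  intro hz
  apply this
  push_cast
  linear_combination -hz

/-- The order three Moebius map. -/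
noncomputable def A (θ : KK) : KK := -1 / (1 + θ)

lemma IsR.A {m : ℤ} {θ : KK} (h : IsR m θ) : IsR m (A θ) := by
  have h1 := h.one_add_ne
  unfold IsR at *
  unfold _root_.A
  field_simp
  linear_combination -h

lemma IsR.AA {m : ℤ} {θ : KK} (h : IsR m θ) : _root_.A (_root_.A θ) = -(1 + θ) / θ := by
  have h1 := h.one_add_ne
  have h0 := h.ne_zero
  unfold _root_.A
  have : 1 + -1 / (1 + θ) ≠ 0 := by
    rw [show 1 + -1 / (1 + θ) = θ / (1 + θ) by field_simp; ring]
    exact div_ne_zero h0 h1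
  rw [show 1 + -1 / (1 + θ) = θ / (1 + θ) by field_simp; ring]
  field_simp

lemma IsR.AAA {m : ℤ} {θ : KK} (h : IsR m θ) : _root_.A (_root_.A (_root_.A θ)) = θ := by
  have h1 := h.one_add_ne
  have h0 := h.ne_zero
  rw [h.AA]
  unfold _root_.A
  rw [show 1 + -(1 + θ) / θ = -1 / θ by field_simp; ring]
  field_simp

/-- All roots. -/
lemma IsR.cases {m : ℤ} {θ η : KK} (h : IsR m θ) (h' : IsR m η) :
    η = θ ∨ η = _root_.A θ ∨ η = _root_.A (_root_.A θ) := by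
  have h1 := h.one_add_ne
  have h0 := h.ne_zero
  have hs : (m : KK) = θ - 1 / (1 + θ) - (1 + θ) / θ := by
    unfold IsR at h
    field_simp
    linear_combination -h
  have key : (η - θ) * ((η - _root_.A θ) * (η - _root_.A (_root_.A θ))) = 0 := by
    rw [h.AA]
    unfold IsR at h'
    rw [hs] at h'
    rw [← h']
    unfold _root_.A
    field_simp
    ring
  rcases mul_eq_zero.1 key with h | h
  · exact Or.inl (sub_eq_zero.1 h)
  rcases mul_eq_zero.1 h with h | h
  · exact Or.inr (Or.inl (sub_eq_zero.1 h))
  · exact Or.inr (Or.inr (sub_eq_zero.1 h))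

lemma IsR.A_ne {m : ℤ} {θ : KK} (h : IsR m θ) : _root_.A θ ≠ θ := by
  intro h'
  have h1 := h.one_add_ne
  unfold _root_.A at h'
  field_simp at h'
  have h2 : θ ^ 2 + θ + 1 = 0 := by linear_combination -h'
  have hr := h
  unfold IsR at h
  apply hr.ne_rat (m / 3)
  push_cast
  field_simp
  linear_combination (θ - 1 - (m : KK)) * h2 - h

lemma IsR.L_eq {m : ℤ} {θ : KK} (h : IsR m θ) : L m = IntermediateField.adjoin ℚ {θ} := by
  have hθ : θ ∈ IntermediateField.adjoin ℚ {θ} := IntermediateField.mem_adjoin_simple_self ℚ θ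
  have hA : ∀ (K : IntermediateField ℚ KK) (x : KK), x ∈ K → _root_.A x ∈ K := by
    intro K x hx
    exact div_mem (neg_mem (one_mem _)) (add_mem (one_mem _) hx)
  apply le_antisymm
  · unfold L
    rw [IntermediateField.adjoin_le_iff]
    intro η hη
    rw [mem_rootSet_f] at hη
    rcases h.cases hη with rfl | rfl | rfl
    · exact hθ
    · exact hA _ _ hθ
    · exact hA _ _ (hA _ _ hθ)
  · rw [IntermediateField.adjoin_le_iff]
    rintro _ rfl
    exact IntermediateField.subset_adjoin _ _ ((mem_rootSet_f m _).2 h)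

lemma exists_sigma {m : ℤ} {θ : KK} (h : IsR m θ) : ∃ σ : KK ≃ₐ[ℚ] KK, σ θ = A θ := by
  have : IsConjRoot ℚ θ (A θ) := by
    unfold IsConjRoot
    rw [h.minpoly, h.A.minpoly]
  obtain ⟨σ, hσ⟩ := this.symm.exists_algEquiv
  exact ⟨σ, hσ⟩

lemma sigma_A (σ : KK ≃ₐ[ℚ] KK) (x : KK) : σ (A x) = A (σ x) := by
  simp [A]

lemma sigma_isR (σ : KK ≃ₐ[ℚ] KK) {n : ℤ} {η : KK} (h : IsR n η) : IsR n (σ η) := by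
  have := congrArg σ h
  simpa [IsR, map_ofNat] using this

lemma fixed_rat {m : ℤ} {θ : KK} (h : IsR m θ) (σ : KK ≃ₐ[ℚ] KK) (hσ : σ θ ≠ θ) (t : KK)
    (ht : t ∈ IntermediateField.adjoin ℚ {θ}) (hst : σ t = t) : ∃ q : ℚ, t = (q : KK) := by
  have hint : IsIntegral ℚ θ := Algebra.IsIntegral.isIntegral θ
  have hp : Module.finrank ℚ (IntermediateField.adjoin ℚ {θ}) = 3 := by
    rw [IntermediateField.adjoin.finrank hint, h.minpoly, f_deg]
  have hle : IntermediateField.adjoin ℚ {t} ≤ IntermediateField.adjoin ℚ {θ} := by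
    rw [IntermediateField.adjoin_le_iff]
    rintro _ rfl
    exact ht
  have hdvd := IntermediateField.finrank_dvd_of_le_right hle
  rw [hp, Nat.dvd_prime Nat.prime_three] at hdvd
  rcases hdvd with h1 | h1
  · rw [IntermediateField.finrank_adjoin_simple_eq_one_iff, IntermediateField.mem_bot] at h1
    obtain ⟨q, hq⟩ := h1
    exact ⟨q, by simpa using hq.symm⟩
  · exfalso
    apply hσ
    have hfd : FiniteDimensional ℚ (IntermediateField.adjoin ℚ {θ}) :=
      IntermediateField.adjoin.finiteDimensional hint
    have heq := IntermediateField.eq_of_le_of_finrank_eq hle (h1.trans hp.symm)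
    have hm := IntermediateField.mem_adjoin_simple_self ℚ θ
    rw [← heq] at hm
    have : IntermediateField.adjoin ℚ {t} ≤ IntermediateField.fixedField (Subgroup.zpowers σ) := by
      rw [IntermediateField.adjoin_le_iff]
      rintro x hx
      rw [Set.mem_singleton_iff] at hx
      subst hx
      rintro ⟨g, hg⟩
      have : Subgroup.zpowers σ ≤ MulAction.stabilizer (KK ≃ₐ[ℚ] KK) x := by
        rw [Subgroup.zpowers_le]
        exact hst
      exact this hg
    exact this hm ⟨σ, Subgroup.mem_zpowers σ⟩

/-- Inversion of roots corresponds to `n ↦ -n-3`. -/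
lemma IsR.inv {n : ℤ} {η : KK} (h : IsR n η) : IsR (-n - 3) η⁻¹ := by
  have h0 := h.ne_zero
  unfold IsR at *
  push_cast
  field_simp
  linear_combination -h

lemma L_neg (n : ℤ) : L (-n - 3) = L n := by
  obtain ⟨η, h⟩ := exists_root n
  rw [h.L_eq, h.inv.L_eq]
  apply le_antisymm <;> rw [IntermediateField.adjoin_le_iff] <;> rintro x hx <;>
    rw [Set.mem_singleton_iff] at hx <;> rw [hx]
  · exact inv_mem (IntermediateField.mem_adjoin_simple_self ℚ η)
  · have := inv_mem (IntermediateField.mem_adjoin_simple_self ℚ η⁻¹)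
    rwa [inv_inv] at this

/-- `σ` acts as `A` on the roots of `f_n`. -/
def RelS (σ : KK ≃ₐ[ℚ] KK) (n : ℤ) : Prop := ∃ η, IsR n η ∧ σ η = A η

lemma RelS.all {σ : KK ≃ₐ[ℚ] KK} {n : ℤ} (h : RelS σ n) {ζ : KK} (hζ : IsR n ζ) : σ ζ = A ζ := by
  obtain ⟨η, h1, h2⟩ := h
  rcases h1.cases hζ with rfl | rfl | rfl
  · exact h2
  · rw [sigma_A, h2]
  · rw [sigma_A, sigma_A, h2]

lemma A_inv {n : ℤ} {η : KK} (h : IsR n η) : A (η⁻¹) = (A (A η))⁻¹ := by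
  have h1 := h.one_add_ne
  have h0 := h.ne_zero
  have h2 : 1 + η⁻¹ ≠ 0 := h.inv.one_add_ne
  rw [h.AA]
  unfold A
  rw [show 1 + η⁻¹ = (1 + η) / η by field_simp; ring]
  rw [inv_div, div_div_eq_mul_div]
  field_simp

lemma AA_ne_A {n : ℤ} {η : KK} (h : IsR n η) : A (A η) ≠ A η := h.A.A_ne

lemma not_both {σ : KK ≃ₐ[ℚ] KK} {n : ℤ} (h : RelS σ n) (h' : RelS σ (-n - 3)) : False := by
  obtain ⟨η, h1, h2⟩ := h
  have h3 := h'.all h1.inv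
  rw [A_inv h1, map_inv₀, h2, inv_inj] at h3
  exact AA_ne_A h1 h3.symm

lemma rel_or {m n : ℤ} {θ : KK} (hθ : IsR m θ) {σ : KK ≃ₐ[ℚ] KK} (hσ : σ θ = A θ)
    (hL : L n = L m) : RelS σ n ∨ RelS σ (-n - 3) := by
  obtain ⟨η, hη⟩ := exists_root n
  rcases hη.cases (sigma_isR σ hη) with h | h | h
  · exfalso
    have hη' : η ∈ IntermediateField.adjoin ℚ {θ} := by
      rw [← hθ.L_eq, ← hL, hη.L_eq]
      exact IntermediateField.mem_adjoin_simple_self ℚ η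
    obtain ⟨q, hq⟩ := fixed_rat hθ σ (by rw [hσ]; exact hθ.A_ne) η hη' h
    exact hη.ne_rat q hq
  · exact Or.inl ⟨η, hη, h⟩
  · right
    refine ⟨η⁻¹, hη.inv, ?_⟩
    rw [A_inv hη, map_inv₀, h]

lemma exists_t {m n : ℤ} {θ : KK} (hθ : IsR m θ) {σ : KK ≃ₐ[ℚ] KK} (hσ : σ θ = A θ)
    (hL : L n = L m) (hn : n ≠ m) (hr : RelS σ n) :
    ∃ t : ℚ, ((n : ℚ) - m) * (t ^ 3 - m * t ^ 2 - (m + 3) * t - 1) =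
      ((m : ℚ) ^ 2 + 3 * m + 9) * (t * (t + 1)) := by
  obtain ⟨η, hη, hση⟩ := hr
  have hne : η - θ ≠ 0 := by
    intro h
    rw [sub_eq_zero] at h
    subst h
    have h0 := hθ.ne_zero
    have h1 := hθ.one_add_ne
    unfold IsR at hθ hη
    have : ((n : KK) - m) * (η * (1 + η)) = 0 := by linear_combination hθ - hη
    rcases mul_eq_zero.1 this with h | h
    · rw [sub_eq_zero] at h
      exact hn (by exact_mod_cast h)
    · exact (mul_ne_zero h0 h1) h
  have hθm := IntermediateField.mem_adjoin_simple_self ℚ θ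
  have hηm : η ∈ IntermediateField.adjoin ℚ {θ} := by
    rw [← hθ.L_eq, ← hL, hη.L_eq]
    exact IntermediateField.mem_adjoin_simple_self ℚ η
  have ht1 : (η * θ + θ + 1) / (η - θ) ∈ IntermediateField.adjoin ℚ {θ} :=
    div_mem (add_mem (add_mem (mul_mem hηm hθm) hθm) (one_mem _)) (sub_mem hηm hθm)
  have ht2 : σ ((η * θ + θ + 1) / (η - θ)) = (η * θ + θ + 1) / (η - θ) := by
    have h1 := hθ.one_add_ne
    have h2 := hη.one_add_ne
    simp only [map_div₀, map_add, map_sub, map_mul, map_one, hσ, hση, A]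
    have : -1 / (1 + η) - -1 / (1 + θ) = (η - θ) / ((1 + η) * (1 + θ)) := by
      field_simp
      ring
    rw [this]
    field_simp
    ring
  obtain ⟨t, ht⟩ := fixed_rat hθ σ (by rw [hσ]; exact hθ.A_ne) _ ht1 ht2
  refine ⟨t, ?_⟩
  rw [div_eq_iff hne] at ht
  have hb : (t : KK) - θ ≠ 0 := hθ.add_ne t
  have ha : (1 + (t : KK)) * θ + 1 = η * (t - θ) := by linear_combination ht
  have h0 := hη.ne_zero
  have h1 := hη.one_add_ne
  unfold IsR at hθ hη
  have key : ((n : KK) - m) * (t ^ 3 - m * t ^ 2 - (m + 3) * t - 1) =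
      ((m : KK) ^ 2 + 3 * m + 9) * (t * (t + 1)) := by
    have hab : (η * (t - θ)) * (t - θ) * (η * (t - θ) + (t - θ)) ≠ 0 := by
      have : η * (t - θ) + (t - θ) = (1 + η) * (t - θ) := by ring
      rw [this]
      exact mul_ne_zero (mul_ne_zero (mul_ne_zero h0 hb) hb) (mul_ne_zero h1 hb)
    apply mul_left_cancel₀ hab
    obtain ⟨a, haa⟩ : ∃ a : KK, a = η * (t - θ) := ⟨_, rfl⟩
    obtain ⟨b, hbb⟩ : ∃ b : KK, b = (t - θ) := ⟨_, rfl⟩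
    obtain ⟨f0, hf0⟩ : ∃ b : KK, b = (t ^ 3 - m * t ^ 2 - (m + 3) * t - 1 : KK) := ⟨_, rfl⟩
    have e1 : a ^ 3 - n * a ^ 2 * b - (n + 3) * a * b ^ 2 - b ^ 3 = 0 := by
      rw [haa, hbb]
      linear_combination (t - θ) ^ 3 * hη
    have e2 : f0 * (a ^ 3 - m * a ^ 2 * b - (m + 3) * a * b ^ 2 - b ^ 3)
        - (m ^ 2 + 3 * m + 9) * (t * (t + 1)) * (a * b * (a + b)) = 0 := by
      rw [haa, hbb, ← ha, hf0]
      linear_combination ((t : KK) ^ 2 + t + 1) ^ 3 * hθ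
    rw [← haa, ← hbb, ← hf0]
    linear_combination e2 - f0 * e1
  exact_mod_cast key

lemma of_t {m n : ℤ} {θ : KK} (hθ : IsR m θ) {σ : KK ≃ₐ[ℚ] KK} (hσ : σ θ = A θ) (t : ℚ)
    (ht : ((n : ℚ) - m) * (t ^ 3 - m * t ^ 2 - (m + 3) * t - 1) =
      ((m : ℚ) ^ 2 + 3 * m + 9) * (t * (t + 1))) : L n = L m ∧ RelS σ n := by
  have hb : (t : KK) - θ ≠ 0 := hθ.add_ne t
  have hq : (t : KK) ^ 2 + t + 1 ≠ 0 := by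
    have : t ^ 2 + t + 1 ≠ 0 := by nlinarith [sq_nonneg (2 * t + 1)]
    exact_mod_cast this
  have hf : (t : KK) ^ 3 - m * t ^ 2 - (m + 3) * t - 1 ≠ 0 := by
    have := no_rat_root m t
    exact_mod_cast this
  have ht' : ((n : KK) - m) * (t ^ 3 - m * t ^ 2 - (m + 3) * t - 1) =
      ((m : KK) ^ 2 + 3 * m + 9) * (t * (t + 1)) := by exact_mod_cast ht
  obtain ⟨η, hηdef⟩ : ∃ η : KK, η = ((1 + t) * θ + 1) / (t - θ) := ⟨_, rfl⟩
  have hη : IsR n η := by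
    unfold IsR at *
    apply mul_left_cancel₀ (mul_ne_zero hf (pow_ne_zero 3 hb))
    have e : η * (t - θ) = (1 + t) * θ + 1 := by rw [hηdef]; field_simp
    obtain ⟨a, ha⟩ : ∃ a : KK, a = (1 + t) * θ + 1 := ⟨_, rfl⟩
    obtain ⟨b, hbb⟩ : ∃ b : KK, b = (t - θ) := ⟨_, rfl⟩
    obtain ⟨f0, hf0⟩ : ∃ b : KK, b = (t ^ 3 - m * t ^ 2 - (m + 3) * t - 1 : KK) := ⟨_, rfl⟩
    have e2 : f0 * (a ^ 3 - m * a ^ 2 * b - (m + 3) * a * b ^ 2 - b ^ 3)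
        - (m ^ 2 + 3 * m + 9) * (t * (t + 1)) * (a * b * (a + b)) = 0 := by
      rw [ha, hbb, hf0]
      linear_combination ((t : KK) ^ 2 + t + 1) ^ 3 * hθ
    rw [← hf0, ← hbb]
    rw [← hf0] at ht'
    rw [← ha, ← hbb] at e
    rw [mul_zero]
    rw [← e] at e2
    linear_combination e2 - η * b * b * (η * b + b) * ht'
  have hc : (t : KK) + 1 + η ≠ 0 := by
    have := hη.add_ne (-1 - t)
    intro h
    apply this
    push_cast
    linear_combination -h
  refine ⟨?_, η, hη, ?_⟩
  · rw [hθ.L_eq, hη.L_eq]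
    have hrat : ∀ (K : IntermediateField ℚ KK), (t : KK) ∈ K := by
      intro K
      simp
    apply le_antisymm <;> rw [IntermediateField.adjoin_le_iff] <;> rintro x hx <;>
      rw [Set.mem_singleton_iff] at hx <;> rw [hx]
    · have hm := IntermediateField.mem_adjoin_simple_self ℚ θ
      rw [hηdef]
      exact div_mem (add_mem (mul_mem (add_mem (one_mem _) (hrat _)) hm) (one_mem _))
        (sub_mem (hrat _) hm)
    · have hm := IntermediateField.mem_adjoin_simple_self ℚ η
      have e : θ = (t * η - 1) / (t + 1 + η) := by
        rw [eq_div_iff hc]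
        have e : η * (t - θ) = (1 + t) * θ + 1 := by rw [hηdef]; field_simp
        linear_combination -e
      rw [e]
      exact div_mem (sub_mem (mul_mem (hrat _) hm) (one_mem _))
        (add_mem (add_mem (hrat _) (one_mem _)) hm)
  · have h1 := hθ.one_add_ne
    have h2 := hη.one_add_ne
    have hm := sigma_isR σ hθ
    rw [hσ] at hm
    have hd := hm.add_ne t
    have e1 : σ η = ((1 + t) * A θ + 1) / (t - A θ) := by
      rw [hηdef]
      simp [hσ]
    rw [e1, div_eq_iff hd]
    have e : η * (t - θ) = (1 + t) * θ + 1 := by rw [hηdef]; field_simp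
    unfold A
    field_simp
    linear_combination -e
/-- The value `N` attached to a pair. -/
def NN (m : ℤ) (p : ℤ × ℤ) : ℤ :=
  m + (m ^ 2 + 3 * m + 9) / F m p.1 p.2 * (p.1 * p.2 * (p.1 + p.2))

/-- The set of pairs. -/
def SS (m : ℤ) : Set (ℤ × ℤ) :=
  {p : ℤ × ℤ | Int.gcd p.1 p.2 = 1 ∧ p.1 * p.2 * (p.1 + p.2) ≠ 0 ∧
        0 < F m p.1 p.2 ∧ F m p.1 p.2 ∣ m ^ 2 + 3 * m + 9}

/-- The set of fields. -/
def TT (m : ℤ) : Set ℤ := {n : ℤ | -1 ≤ n ∧ n ≠ m ∧ n ≠ -m - 3 ∧ L n = L m}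

/-- The order three symmetry. -/
def rho (p : ℤ × ℤ) : ℤ × ℤ := (p.2, -p.1 - p.2)

lemma F_rho (m : ℤ) (p : ℤ × ℤ) : F m (rho p).1 (rho p).2 = F m p.1 p.2 := by
  unfold F rho; ring

lemma rho_mem {m : ℤ} {p : ℤ × ℤ} (h : p ∈ SS m) : rho p ∈ SS m := by
  obtain ⟨h1, h2, h3, h4⟩ := h
  refine ⟨?_, ?_, by rwa [F_rho], by rwa [F_rho]⟩
  · rw [← Int.isCoprime_iff_gcd_eq_one] at *
    obtain ⟨a, b, hab⟩ := h1
    exact ⟨b - a, -a, by simp only [rho]; linear_combination hab⟩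
  · intro h
    apply h2
    simp only [rho] at h
    linear_combination h

lemma NN_rho (m : ℤ) (p : ℤ × ℤ) : NN m (rho p) = NN m p := by
  unfold NN
  rw [F_rho]
  simp only [rho]
  ring

lemma D_pos (m : ℤ) : 0 < m ^ 2 + 3 * m + 9 := by nlinarith [sq_nonneg (2 * m + 3)]

lemma NN_mul {m : ℤ} {p : ℤ × ℤ} (h : p ∈ SS m) :
    (NN m p - m) * F m p.1 p.2 = (m ^ 2 + 3 * m + 9) * (p.1 * p.2 * (p.1 + p.2)) := by
  have := Int.ediv_mul_cancel h.2.2.2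
  unfold NN
  linear_combination (p.1 * p.2 * (p.1 + p.2)) * this

lemma NN_ne {m : ℤ} {p : ℤ × ℤ} (h : p ∈ SS m) : NN m p ≠ m := by
  intro h'
  have := NN_mul h
  rw [h', sub_self, zero_mul] at this
  exact mul_ne_zero (D_pos m).ne' h.2.1 this.symm

lemma NN_prop {m : ℤ} {θ : KK} (hθ : IsR m θ) {σ : KK ≃ₐ[ℚ] KK} (hσ : σ θ = A θ)
    {p : ℤ × ℤ} (h : p ∈ SS m) : L (NN m p) = L m ∧ RelS σ (NN m p) := by
  have hy : (p.2 : ℚ) ≠ 0 := by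
    have : p.2 ≠ 0 := by
      intro h0; apply h.2.1; rw [h0]; ring
    exact_mod_cast this
  apply of_t hθ hσ ((p.1 : ℚ) / p.2)
  have := NN_mul h
  have e : ((NN m p : ℚ) - m) * ((p.1 : ℚ) ^ 3 - m * p.1 ^ 2 * p.2 - (m + 3) * p.1 * p.2 ^ 2 - p.2 ^ 3)
      = ((m : ℚ) ^ 2 + 3 * m + 9) * (p.1 * p.2 * (p.1 + p.2)) := by
    unfold F at this
    exact_mod_cast this
  field_simp
  linear_combination e

lemma par {a b x y u v : ℤ} (hab : a * x + b * y = 1) {c d : ℤ} (hcd : c * u + d * v = 1)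
    (h : x * v = y * u) : (x = u ∧ y = v) ∨ (x = -u ∧ y = -v) := by
  -- `(u, v) = k (x, y)`, and conversely
  have hu : u = (a * u + b * v) * x := by linear_combination (-u) * hab - b * h
  have hv : v = (a * u + b * v) * y := by linear_combination (-v) * hab + a * h
  have hk : IsUnit (a * u + b * v) := by
    apply IsUnit.of_mul_eq_one (c * x + d * y)
    linear_combination hcd - c * hu - d * hv
  rcases Int.isUnit_iff.1 hk with hk | hk <;> rw [hk] at hu hv
  · left; constructor <;> linarith
  · right; constructor <;> linarith

lemma par_SS {m : ℤ} {p q : ℤ × ℤ} (hp : p ∈ SS m) (hq : q ∈ SS m)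
    (h : p.1 * q.2 = p.2 * q.1) : p = q := by
  obtain ⟨a, b, hab⟩ := Int.isCoprime_iff_gcd_eq_one.2 hp.1
  obtain ⟨c, d, hcd⟩ := Int.isCoprime_iff_gcd_eq_one.2 hq.1
  rcases par hab hcd h with ⟨h1, h2⟩ | ⟨h1, h2⟩
  · exact Prod.ext h1 h2
  · exfalso
    have hp3 := hp.2.2.1
    have hq3 := hq.2.2.1
    have : F m p.1 p.2 = - F m q.1 q.2 := by rw [h1, h2]; unfold F; ring
    linarith

lemma orbit {m : ℤ} {p q : ℤ × ℤ} (hp : p ∈ SS m) (hq : q ∈ SS m) (h : NN m p = NN m q) :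
    p = q ∨ p = rho q ∨ p = rho (rho q) := by
  have h1 := NN_mul hp
  have h2 := NN_mul hq
  rw [h] at h1
  have hne : NN m q - m ≠ 0 := sub_ne_zero.2 (NN_ne hq)
  have h3 : p.1 * p.2 * (p.1 + p.2) * F m q.1 q.2 - q.1 * q.2 * (q.1 + q.2) * F m p.1 p.2 = 0 := by
    apply mul_left_cancel₀ (D_pos m).ne'
    linear_combination F m p.1 p.2 * h2 - F m q.1 q.2 * h1
  have h4 : (p.1 * q.2 - p.2 * q.1) * ((p.1 * (rho q).2 - p.2 * (rho q).1) *
      (p.1 * (rho (rho q)).2 - p.2 * (rho (rho q)).1)) = 0 := by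
    rw [← h3]
    simp only [rho, F]
    ring
  rcases mul_eq_zero.1 h4 with h5 | h5
  · exact Or.inl (par_SS hp hq (sub_eq_zero.1 h5))
  rcases mul_eq_zero.1 h5 with h5 | h5
  · exact Or.inr (Or.inl (par_SS hp (rho_mem hq) (sub_eq_zero.1 h5)))
  · exact Or.inr (Or.inr (par_SS hp (rho_mem (rho_mem hq)) (sub_eq_zero.1 h5)))

lemma F_dvd_of_eq {m n x y : ℤ} (hc : IsCoprime x y)
    (h : (n - m) * F m x y = (m ^ 2 + 3 * m + 9) * (x * y * (x + y))) :
    F m x y ∣ m ^ 2 + 3 * m + 9 := by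
  have c1 : IsCoprime (F m x y) x := by
    have : IsCoprime (-(y ^ 3) + x * (x ^ 2 - m * x * y - (m + 3) * y ^ 2)) x :=
      (IsCoprime.neg_left hc.symm.pow_left).add_mul_left_left _
    convert this using 1
    unfold F; ring
  have c2 : IsCoprime (F m x y) y := by
    have : IsCoprime (x ^ 3 + y * (- m * x ^ 2 - (m + 3) * x * y - y ^ 2)) y :=
      (hc.pow_left).add_mul_left_left _
    convert this using 1
    unfold F; ring
  have c3 : IsCoprime (F m x y) (x + y) := by
    have h0 : IsCoprime y (x + y) := by
      obtain ⟨a, b, hab⟩ := hc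
      exact ⟨b - a, a, by linear_combination hab⟩
    have : IsCoprime (y ^ 3 + (x + y) * (x ^ 2 - (m + 1) * x * y - 2 * y ^ 2)) (x + y) :=
      (h0.pow_left).add_mul_left_left _
    convert this using 1
    unfold F; ring
  exact ((c1.mul_right c2).mul_right c3).dvd_of_dvd_mul_right (Dvd.intro_left _ h)

lemma exists_pair {m n : ℤ} {θ : KK} (hθ : IsR m θ) {σ : KK ≃ₐ[ℚ] KK} (hσ : σ θ = A θ)
    (hL : L n = L m) (hn : n ≠ m) (hr : RelS σ n) : ∃ p ∈ SS m, NN m p = n := by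
  obtain ⟨t, ht⟩ := exists_t hθ hσ hL hn hr
  obtain ⟨x, y, hc, hxy, hpos⟩ : ∃ x y : ℤ, IsCoprime x y ∧
      (n - m) * F m x y = (m ^ 2 + 3 * m + 9) * (x * y * (x + y)) ∧ 0 < F m x y := by
    have hd : (t.den : ℚ) ≠ 0 := by exact_mod_cast t.den_ne_zero
    have htn : t * t.den = t.num := Rat.mul_den_eq_num t
    have hc : Int.gcd t.num t.den = 1 := by simpa [Int.gcd] using t.reduced
    have h0 : (n - m) * F m t.num t.den =
        (m ^ 2 + 3 * m + 9) * (t.num * t.den * (t.num + t.den)) := by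
      have : ((n : ℚ) - m) * ((t.num : ℚ) ^ 3 - m * t.num ^ 2 * t.den - (m + 3) * t.num * t.den ^ 2
          - t.den ^ 3) = ((m : ℚ) ^ 2 + 3 * m + 9) * (t.num * t.den * (t.num + t.den)) := by
        rw [← htn]
        linear_combination (t.den : ℚ) ^ 3 * ht
      unfold F
      exact_mod_cast this
    have hodd := F_odd m t.num t.den hc
    have hc' := Int.isCoprime_iff_gcd_eq_one.2 hc
    rcases lt_trichotomy 0 (F m t.num t.den) with h | h | h
    · exact ⟨_, _, hc', h0, h⟩
    · omega
    · have e : F m (-t.num) (-t.den) = - F m t.num t.den := by unfold F; ring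
      refine ⟨-t.num, -t.den, hc'.neg_neg, ?_, by rw [e]; linarith⟩
      rw [e]
      linear_combination -h0
  have hdvd := F_dvd_of_eq hc hxy
  have hmem : (x, y) ∈ SS m := by
    refine ⟨Int.isCoprime_iff_gcd_eq_one.1 hc, ?_, hpos, hdvd⟩
    intro h0
    simp only at h0
    rw [h0, mul_zero] at hxy
    exact mul_ne_zero (sub_ne_zero.2 hn) hpos.ne' hxy
  refine ⟨_, hmem, ?_⟩
  have := NN_mul hmem
  simp only at this
  rw [← hxy] at this
  have := mul_right_cancel₀ hpos.ne' this
  linarith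

/-- The normalised value. -/
def GG (m : ℤ) (p : ℤ × ℤ) : ℤ := max (NN m p) (-NN m p - 3)

lemma GG_cases (m : ℤ) (p : ℤ × ℤ) : GG m p = NN m p ∨ GG m p = -NN m p - 3 := by
  unfold GG; omega

lemma GG_mem {m : ℤ} {p : ℤ × ℤ} (h : p ∈ SS m) : GG m p ∈ TT m := by
  obtain ⟨θ, hθ⟩ := exists_root m
  obtain ⟨σ, hσ⟩ := exists_sigma hθ
  obtain ⟨h1, h2⟩ := NN_prop hθ hσ h
  have h3 := NN_ne h
  have h4 : NN m p ≠ -m - 3 := by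
    intro h'
    rw [h'] at h2
    exact not_both ⟨θ, hθ, hσ⟩ h2
  have h5 : L (GG m p) = L m := by
    rcases GG_cases m p with h | h <;> rw [h]
    · exact h1
    · rw [L_neg, h1]
  refine ⟨?_, ?_, ?_, h5⟩
  · unfold GG; omega
  · rcases GG_cases m p with h | h <;> omega
  · rcases GG_cases m p with h | h <;> omega

lemma GG_surj {m n : ℤ} (h : n ∈ TT m) : ∃ p ∈ SS m, GG m p = n := by
  obtain ⟨θ, hθ⟩ := exists_root m
  obtain ⟨σ, hσ⟩ := exists_sigma hθ
  obtain ⟨h1, h2, h3, h4⟩ := h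
  rcases rel_or hθ hσ h4 with hr | hr
  · obtain ⟨p, hp, h⟩ := exists_pair hθ hσ h4 h2 hr
    exact ⟨p, hp, by unfold GG; omega⟩
  · obtain ⟨p, hp, h⟩ := exists_pair hθ hσ (by rw [L_neg, h4]) (by omega) hr
    exact ⟨p, hp, by unfold GG; omega⟩

lemma GG_inj {m : ℤ} {p q : ℤ × ℤ} (hp : p ∈ SS m) (hq : q ∈ SS m) (h : GG m p = GG m q) :
    p = q ∨ p = rho q ∨ p = rho (rho q) := by
  apply orbit hp hq
  by_contra hne
  obtain ⟨θ, hθ⟩ := exists_root m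
  obtain ⟨σ, hσ⟩ := exists_sigma hθ
  have h1 := (NN_prop hθ hσ hp).2
  have h2 := (NN_prop hθ hσ hq).2
  have : NN m p = -NN m q - 3 := by
    unfold GG at h; omega
  rw [this] at h1
  exact not_both h2 h1

lemma rho_ne {m : ℤ} {p : ℤ × ℤ} (h : p ∈ SS m) : rho p ≠ p := by
  intro h'
  have h1 := congrArg Prod.fst h'
  have h2 := congrArg Prod.snd h'
  simp only [rho] at h1 h2
  apply h.2.1
  have : p.1 = 0 := by omega
  rw [this]; ring

lemma rho3 (p : ℤ × ℤ) : rho (rho (rho p)) = p := by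
  unfold rho
  ext <;> simp only <;> ring

/-- Powers of the symmetry. -/
def rhoPow (i : Fin 3) (p : ℤ × ℤ) : ℤ × ℤ :=
  match i with
  | 0 => p
  | 1 => rho p
  | 2 => rho (rho p)

lemma rhoPow_mem {m : ℤ} {p : ℤ × ℤ} (h : p ∈ SS m) (i : Fin 3) : rhoPow i p ∈ SS m := by
  fin_cases i
  · exact h
  · exact rho_mem h
  · exact rho_mem (rho_mem h)

lemma GG_rhoPow (m : ℤ) (p : ℤ × ℤ) (i : Fin 3) : GG m (rhoPow i p) = GG m p := by
  unfold GG
  have : NN m (rhoPow i p) = NN m p := by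
    fin_cases i
    · rfl
    · exact NN_rho m p
    · exact (NN_rho m (rho p)).trans (NN_rho m p)
  rw [this]

lemma rhoPow_inj {m : ℤ} {p : ℤ × ℤ} (h : p ∈ SS m) {i j : Fin 3} (hij : rhoPow i p = rhoPow j p) :
    i = j := by
  have h1 := rho_ne h
  have h2 := rho_ne (rho_mem h)
  have h3 := rho_ne (rho_mem (rho_mem h))
  rw [rho3] at h3
  fin_cases i <;> fin_cases j <;> simp [rhoPow] at hij ⊢
  · exact h1 hij.symm
  · exact h3 hij
  · exact h1 hij
  · exact h2 hij.symm
  · exact h3 hij.symm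
  · exact h2 hij

lemma main_card (m : ℤ) : (SS m).ncard = 3 * (TT m).ncard := by
  choose s hs hs' using fun n : TT m => GG_surj n.2
  let g : TT m × Fin 3 → SS m := fun a => ⟨rhoPow a.2 (s a.1), rhoPow_mem (hs a.1) a.2⟩
  have hg : Function.Bijective g := by
    constructor
    · rintro ⟨n, i⟩ ⟨n', i'⟩ h
      have h' : rhoPow i (s n) = rhoPow i' (s n') := congrArg Subtype.val h
      have h1 := congrArg (GG m) h'
      rw [GG_rhoPow, GG_rhoPow, hs', hs'] at h1
      have h2 : n = n' := Subtype.ext h1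
      subst h2
      rw [rhoPow_inj (hs n) h']
    · rintro ⟨q, hq⟩
      have h := GG_inj hq (hs ⟨GG m q, GG_mem hq⟩) (hs' ⟨GG m q, GG_mem hq⟩).symm
      rcases h with h | h | h
      · exact ⟨(⟨GG m q, GG_mem hq⟩, 0), Subtype.ext h.symm⟩
      · exact ⟨(⟨GG m q, GG_mem hq⟩, 1), Subtype.ext h.symm⟩
      · exact ⟨(⟨GG m q, GG_mem hq⟩, 2), Subtype.ext h.symm⟩
  have := Nat.card_congr (Equiv.ofBijective g hg)
  rw [Nat.card_prod, Nat.card_coe_set_eq, Nat.card_coe_set_eq, Nat.card_fin] at this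
  rw [← this, mul_comm]

theorem stmt1 (m : ℤ) :
    {p : ℤ × ℤ | Int.gcd p.1 p.2 = 1 ∧ p.1 * p.2 * (p.1 + p.2) ≠ 0 ∧
        0 < F m p.1 p.2 ∧ F m p.1 p.2 ∣ m ^ 2 + 3 * m + 9}.ncard =
      3 * {n : ℤ | -1 ≤ n ∧ n ≠ m ∧ n ≠ -m - 3 ∧ L n = L m}.ncard := main_card m
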